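/- arXiv:2007.03554 — 3 statements merged into one kernel-verified Lean document; each statement's English description precedes it below -/
import Mathlib

section
/- Let G be a finite group, p a prime dividing |G|, H a subgroup of G, and x ∈ H a p-element. Define spr_G(x) = |S_G(x)|/|G| where S_G(x) = {g ∈ G : ⟨x⟩ is subnormal in ⟨x,g⟩}. Then spr_G(x) ≤ spr_H(x); moreover, if H is normal in G, then spr_G(x) = spr_H(x). -/
open Subgroup

/-- `H` is normal in `K` (both subgroups of an ambient group). -/
def NormalIn {G : Type*} [Group G] (H K : Subgroup G) : Prop :=
  H ≤ K ∧ (H.subgroupOf K).Normal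

/-- `H` is subnormal in `K`: there is a chain `H = H₀ ⊴ H₁ ⊴ ⋯ ⊴ Hₙ = K`. -/
def IsSubnormalIn {G : Type*} [Group G] (H K : Subgroup G) : Prop :=
  Relation.ReflTransGen NormalIn H K

/-- The Wielandt subnormalizer of `⟨x⟩` in `G`. -/
def subnormalizerSet {G : Type*} [Group G] (x : G) : Set G :=
  {g : G | IsSubnormalIn (zpowers x) (zpowers x ⊔ zpowers g)}

/-- `spr_G(x) = |S_G(x)|/|G|`. -/
noncomputable def spr {G : Type*} [Group G] (x : G) : ℚ :=
  (Nat.card (subnormalizerSet x) : ℚ) / (Nat.card G : ℚ)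


/-- `x` is a `p`-element: its order is a power of `p`. -/
def IsPElement (p : ℕ) {G : Type*} [Group G] (x : G) : Prop :=
  ∃ k : ℕ, orderOf x = p ^ k

/-!
For a `p`-element `x`, the subgroup `⟨x⟩` is subnormal in `⟨x, g⟩` iff some `g`-invariant
`p`-subgroup contains `x`. Being closed under intersection, the `g`-invariant `p`-subgroups
containing `x` form a poset of Euler characteristic `1`, or `0` if there are none, so `|S_G(x)|`
is the sum over `g` of these Euler characteristics. Group the chains by their least element `R`
instead: every `R` which is not a Sylow subgroup contributes `0`, because the Euler
characteristics of the posets of `g`-invariant `p`-subgroups strictly above `R` sum to `|N_G(R)|`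
over `g ∈ N_G(R)` (pass from `G` to `N_G(R)`, where all Sylow subgroups contain `R`, and induct on
the index of `R`). The Sylow subgroups that remain give Casolo's formula: `spr_G(x)` is the
proportion of Sylow `p`-subgroups of `G` that contain `x`.

This proportion is the average, over the Sylow subgroups `P` of `G`, of the proportion of `h ∈ H`
with `x ∈ h P h⁻¹`. Since `P ∩ H` lies in a Sylow subgroup `Q` of `H`, the latter is at most the
proportion of `h ∈ H` with `x ∈ h Q h⁻¹`, which is `spr_H(x)` because `H` permutes its Sylow
subgroups transitively; and if `H` is normal, then `P ∩ H = Q`.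
-/

open scoped Classical Pointwise BigOperators

attribute [local instance] Fintype.ofFinite

section EulerChar

variable {α β : Type*} [PartialOrder α] [PartialOrder β]

/-- The Euler characteristic (number of nonempty chains, signed by dimension) of the poset carried
by the finite set `s`: the chains with least element `a` contribute `1` minus the Euler
characteristic of the part of `s` strictly above `a`. -/
noncomputable def eulerChar (s : Finset α) : ℤ :=
  ∑ a ∈ s.attach, (1 - eulerChar {b ∈ s | a.1 < b})
termination_by s.card
decreasing_by
  exact Finset.card_lt_card (Finset.filter_ssubset.2 ⟨a, a.2, lt_irrefl _⟩)

theorem eulerChar_eq_sum (s : Finset α) :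
    eulerChar s = ∑ a ∈ s, (1 - eulerChar {b ∈ s | a < b}) := by
  rw [eulerChar]
  exact s.sum_attach fun a => 1 - eulerChar {b ∈ s | a < b}

theorem eulerChar_filter_mem_eq_sum (s : Finset α) {U : Set α} (hU : IsUpperSet U) :
    eulerChar {a ∈ s | a ∈ U} = ∑ a ∈ s with a ∈ U, (1 - eulerChar {b ∈ s | a < b}) := by
  rw [eulerChar_eq_sum]
  refine Finset.sum_congr rfl fun a ha => ?_
  rw [Finset.filter_filter]
  have haU : a ∈ U := (Finset.mem_filter.1 ha).2
  have habove : ∀ b ∈ s, b ∈ U ∧ a < b ↔ a < b := fun b _ =>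
    and_iff_right_of_imp fun hab => hU hab.le haU
  rw [Finset.filter_congr habove]

theorem filter_le_eq_insert_filter_lt {s : Finset α} {a : α} (ha : a ∈ s) :
    {b ∈ s | a ≤ b} = insert a {b ∈ s | a < b} := by
  ext b
  simp only [Finset.mem_filter, Finset.mem_insert, le_iff_eq_or_lt]
  grind

theorem eulerChar_filter_le {s : Finset α} {a : α} (ha : a ∈ s) :
    eulerChar {b ∈ s | a ≤ b} = 1 := by
  have hIci := eulerChar_filter_mem_eq_sum s (isUpperSet_Ici a)
  have hIoi := eulerChar_filter_mem_eq_sum s (isUpperSet_Ioi a)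
  simp only [Set.mem_Ici, Set.mem_Ioi] at hIci hIoi
  rw [hIci, filter_le_eq_insert_filter_lt ha, Finset.sum_insert (by simp), ← hIoi, sub_add_cancel]

theorem eulerChar_eq_one_of_infClosed {γ : Type*} [SemilatticeInf γ] {s : Finset γ}
    (hne : s.Nonempty) (hs : InfClosed (s : Set γ)) : eulerChar s = 1 := by
  have hleast : s.inf' hne id ∈ s := hs.finsetInf'_mem hne fun _ ha => ha
  rw [← eulerChar_filter_le hleast, Finset.filter_true_of_mem fun a ha => s.inf'_le id ha]

-- The weight of `a` is forced, from the top down, to be `1 - eulerChar {b ∈ s | a < b}`.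
theorem eulerChar_eq_sum_of_weighting {s : Finset α} {w : α → ℤ}
    (hw : ∀ a ∈ s, ∑ b ∈ s with a ≤ b, w b = 1) : eulerChar s = ∑ a ∈ s, w a := by
  induction s using Finset.strongInduction with
  | H s ih =>
    rw [eulerChar_eq_sum]
    refine Finset.sum_congr rfl fun a ha => ?_
    have hrestrict : ∀ b ∈ {b ∈ s | a < b}, ∑ c ∈ {b ∈ s | a < b} with b ≤ c, w c = 1 := by
      intro b hb
      obtain ⟨hbs, hab⟩ := Finset.mem_filter.1 hb
      rw [← hw b hbs, Finset.filter_filter]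
      exact congrArg (∑ c ∈ ·, w c) (Finset.filter_congr fun c _ =>
        and_iff_right_of_imp fun hbc => hab.trans_le hbc)
    have hsum := hw a ha
    rw [filter_le_eq_insert_filter_lt ha, Finset.sum_insert (by simp)] at hsum
    rw [ih _ (Finset.filter_ssubset.2 ⟨a, ha, lt_irrefl _⟩) hrestrict, ← hsum, add_sub_cancel_right]

theorem eulerChar_eq_of_adjoint {s : Finset α} {t : Finset β} {f : α → β} {g : β → α}
    (hf : Set.MapsTo f s t) (hg : Set.MapsTo g t s)
    (hgf : ∀ a ∈ s, ∀ b ∈ t, g b ≤ a ↔ b ≤ f a) : eulerChar s = eulerChar t := by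
  let w : α → ℤ := fun a => 1 - eulerChar {a' ∈ s | a < a'}
  have hpush : ∀ b ∈ t, ∑ c ∈ t with b ≤ c, ∑ a ∈ s with f a = c, w a = 1 := by
    intro b hb
    calc ∑ c ∈ t with b ≤ c, ∑ a ∈ s with f a = c, w a
        = ∑ a ∈ s with g b ≤ a, w a := by
          rw [← Finset.sum_fiberwise_of_maps_to (s := {a ∈ s | g b ≤ a}) (g := f) (f := w)
            (t := {c ∈ t | b ≤ c})]
          · refine Finset.sum_congr rfl fun c hc => ?_
            rw [Finset.filter_filter]
            refine congrArg (∑ a ∈ ·, w a) (Finset.filter_congr fun a ha => ?_)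
            grind
          · grind [Set.MapsTo]
      _ = eulerChar {a ∈ s | g b ≤ a} :=
          (eulerChar_filter_mem_eq_sum s (isUpperSet_Ici (g b))).symm
      _ = 1 := eulerChar_filter_le (hg hb)
  rw [eulerChar_eq_sum_of_weighting hpush, eulerChar_eq_sum]
  exact (Finset.sum_fiberwise_of_maps_to hf w).symm

end EulerChar

section PSubgroups

variable {G : Type*} [Group G] {p : ℕ}

theorem normalIn_iff_le_normalizer {B C : Subgroup G} :
    NormalIn B C ↔ B ≤ C ∧ C ≤ normalizer (B : Set G) :=
  and_congr_right fun h => normal_subgroupOf_iff_le_normalizer h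

theorem IsPElement.isPGroup_zpowers [Fact p.Prime] {x : G} (hx : IsPElement p x) :
    IsPGroup p (zpowers x) := by
  obtain ⟨k, hk⟩ := hx
  exact IsPGroup.of_card ((Nat.card_zpowers x).trans hk)

theorem normalIn_sup {M N B : Subgroup G} (hM : NormalIn M B) (hN : NormalIn N B) :
    NormalIn (M ⊔ N) B := by
  rw [normalIn_iff_le_normalizer] at *
  exact ⟨sup_le hM.1 hN.1,
    (le_inf hM.2 hN.2).trans (normalizer_inf_normalizer_le_normalizer_sup M N)⟩

theorem isPGroup_sup_of_normalIn {M N B : Subgroup G} (hMp : IsPGroup p M) (hNp : IsPGroup p N)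
    (hM : NormalIn M B) (hN : NormalIn N B) : IsPGroup p ↥(M ⊔ N) :=
  hMp.to_sup_of_normal_left' hNp (hN.1.trans (normalIn_iff_le_normalizer.1 hM).2)

theorem normalIn_map_conj {M B : Subgroup G} {c : G} (hc : c ∈ normalizer (B : Set G))
    (hM : NormalIn M B) : NormalIn (M.map (MulAut.conj c).toMonoidHom) B := by
  rw [normalIn_iff_le_normalizer] at *
  have hB : B.map (MulAut.conj c).toMonoidHom = B := mem_normalizer_iff_map_conj_eq.1 hc
  constructor
  · exact (map_mono hM.1).trans_eq hB
  · exact hB.ge.trans ((map_mono hM.2).trans (le_normalizer_map _))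

variable [Finite G]

theorem lt_inf_normalizer_of_isPGroup [Fact p.Prime] {A R : Subgroup G} (hR : IsPGroup p R)
    (hAR : A < R) : A < R ⊓ normalizer (A : Set G) := by
  have : Group.IsNilpotent R := hR.isNilpotent
  have hA : A.subgroupOf R < ⊤ := by
    rw [lt_top_iff_ne_top, Ne, subgroupOf_eq_top]
    exact not_le_of_gt hAR
  have hgrow := Group.normalizerCondition_of_isNilpotent _ hA
  rw [← subgroupOf_normalizer_eq hAR.le] at hgrow
  have := map_subtype_lt_map_subtype.2 hgrow
  rwa [map_subgroupOf_eq_of_le hAR.le, subgroupOf_map_subtype, inf_comm] at this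

theorem isSubnormalIn_of_isPGroup [Fact p.Prime] {A R : Subgroup G} (hR : IsPGroup p R)
    (hAR : A ≤ R) : IsSubnormalIn A R := by
  induction A using WellFoundedGT.induction with
  | ind A ih =>
    obtain rfl | hlt := hAR.eq_or_lt
    · exact .refl
    · have hgrow := lt_inf_normalizer_of_isPGroup hR hlt
      exact .head (normalIn_iff_le_normalizer.2 ⟨hgrow.le, inf_le_right⟩) (ih _ hgrow inf_le_left)

theorem exists_isPGroup_normalIn_of_normalIn {N B C : Subgroup G} (hN : IsPGroup p N)
    (hNB : NormalIn N B) (hBC : NormalIn B C) :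
    ∃ M, N ≤ M ∧ IsPGroup p M ∧ NormalIn M C := by
  obtain ⟨M, hNM, ⟨hM, hMB⟩, hmax⟩ := Finite.exists_le_maximal
    (p := fun M : Subgroup G => IsPGroup p M ∧ NormalIn M B) ⟨hN, hNB⟩
  rw [normalIn_iff_le_normalizer] at hBC
  refine ⟨M, hNM, hM, normalIn_iff_le_normalizer.2 ⟨hMB.1.trans hBC.1, fun c hc => ?_⟩⟩
  have hconj := normalIn_map_conj (hBC.2 hc) hMB
  have hle := hmax ⟨isPGroup_sup_of_normalIn hM (hM.map _) hMB hconj, normalIn_sup hMB hconj⟩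
    le_sup_left
  exact mem_normalizer_fintype fun n hn => hle (le_sup_right (a := M) (mem_map_of_mem _ hn))

theorem IsSubnormalIn.exists_isPGroup_normalIn {A K : Subgroup G} (hA : IsPGroup p A)
    (h : IsSubnormalIn A K) : ∃ N, A ≤ N ∧ IsPGroup p N ∧ NormalIn N K := by
  induction h with
  | refl => exact ⟨A, le_rfl, hA, normalIn_iff_le_normalizer.2 ⟨le_rfl, le_normalizer⟩⟩
  | tail _ hBC ih =>
    obtain ⟨N, hAN, hN, hNB⟩ := ih
    obtain ⟨M, hNM, hM, hMC⟩ := exists_isPGroup_normalIn_of_normalIn hN hNB hBC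
    exact ⟨M, hAN.trans hNM, hM, hMC⟩

end PSubgroups

section Lefschetz

variable {G : Type*} [Group G] [Finite G] {p : ℕ}

/-- The poset of `p`-subgroups (including the trivial one) fixed by conjugation by `g`. -/
noncomputable def invariantPSubgroups (p : ℕ) (g : G) : Finset (Subgroup G) :=
  {R | IsPGroup p R ∧ g ∈ normalizer (R : Set G)}

theorem mem_invariantPSubgroups {g : G} {R : Subgroup G} :
    R ∈ invariantPSubgroups p g ↔ IsPGroup p R ∧ g ∈ normalizer (R : Set G) :=
  Finset.mem_filter_univ _

theorem mem_subnormalizerSet_iff [Fact p.Prime] {x g : G} (hx : IsPElement p x) :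
    g ∈ subnormalizerSet x ↔ ∃ R ∈ invariantPSubgroups p g, zpowers x ≤ R := by
  have hg : g ∈ zpowers x ⊔ zpowers g := mem_sup_right (mem_zpowers g)
  constructor
  · intro h
    obtain ⟨N, hxN, hN, hNK⟩ := IsSubnormalIn.exists_isPGroup_normalIn hx.isPGroup_zpowers h
    exact ⟨N, mem_invariantPSubgroups.2 ⟨hN, (normalIn_iff_le_normalizer.1 hNK).2 hg⟩, hxN⟩
  · rintro ⟨R, hR, hxR⟩
    obtain ⟨hRp, hgR⟩ := mem_invariantPSubgroups.1 hR
    have hle : zpowers x ⊔ zpowers g ≤ normalizer (R : Set G) :=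
      sup_le (hxR.trans le_normalizer) (zpowers_le.2 hgR)
    have hnormal : NormalIn (R ⊓ (zpowers x ⊔ zpowers g)) (zpowers x ⊔ zpowers g) :=
      normalIn_iff_le_normalizer.2
        ⟨inf_le_right, (le_inf hle le_normalizer).trans inf_normalizer_le_normalizer_inf⟩
    exact (isSubnormalIn_of_isPGroup (hRp.to_le inf_le_left) (le_inf hxR le_sup_left)).tail hnormal

/-- The sum over `g ∈ N_G(R)` of the Euler characteristic of the poset of `g`-invariant
`p`-subgroups strictly containing `R`. By the Lefschetz fixed point formula it is `|N_G(R)|` times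
the Euler characteristic of the orbit space of `N_G(R)` on the poset of `p`-subgroups above `R`. -/
noncomputable def lefschetzSum (p : ℕ) (R : Subgroup G) : ℤ :=
  ∑ g : normalizer (R : Set G), eulerChar {S ∈ invariantPSubgroups p (g : G) | R < S}

theorem lefschetzSum_sylow (P : Sylow p G) : lefschetzSum p (P : Subgroup G) = 0 := by
  refine Finset.sum_eq_zero fun g _ => ?_
  have hempty : {S ∈ invariantPSubgroups p (g : G) | (P : Subgroup G) < S} = ∅ :=
    Finset.filter_eq_empty_iff.2 fun S hS hPS =>
      hPS.ne' (P.is_maximal' (mem_invariantPSubgroups.1 hS).1 hPS.le)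
  rw [hempty, eulerChar_eq_sum, Finset.sum_empty]

theorem lefschetzSum_of_normal (R : Subgroup G) [R.Normal] :
    lefschetzSum p R = ∑ g : G, eulerChar {S ∈ invariantPSubgroups p g | R < S} :=
  Fintype.sum_bijective Subtype.val
    ⟨Subtype.val_injective, fun g => ⟨⟨g, normalizer_eq_top R ▸ mem_top g⟩, rfl⟩⟩ _ _ fun _ => rfl

theorem sum_eulerChar_eq_sum_card_sub_lefschetzSum {U : Set (Subgroup G)} (hU : IsUpperSet U) :
    ∑ g : G, eulerChar {R ∈ invariantPSubgroups p g | R ∈ U} =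
      ∑ R ∈ {R : Subgroup G | R ∈ U ∧ IsPGroup p R},
        ((Nat.card (normalizer (R : Set G)) : ℤ) - lefschetzSum p R) := by
  simp_rw [eulerChar_filter_mem_eq_sum _ hU]
  rw [Finset.sum_comm' (t' := {R : Subgroup G | R ∈ U ∧ IsPGroup p R})
    (s' := fun R => {g : G | g ∈ normalizer (R : Set G)})]
  · refine Finset.sum_congr rfl fun R _ => ?_
    rw [Finset.sum_subtype (p := (· ∈ normalizer (R : Set G))) _ (by simp), Finset.sum_sub_distrib,
      Finset.sum_const, Finset.card_univ, nsmul_one, ← Nat.card_eq_fintype_card]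
    rfl
  · intro g R
    simp only [Finset.mem_univ, Finset.mem_filter, mem_invariantPSubgroups, true_and]
    tauto

variable [Fact p.Prime]

theorem card_normalizer_mul_card_sylow (P : Sylow p G) :
    Nat.card (normalizer (P : Set G)) * Nat.card (Sylow p G) = Nat.card G := by
  rw [P.card_eq_index_normalizer, card_mul_index]

theorem sum_eulerChar_mul_card_sylow {U : Set (Subgroup G)} (hU : IsUpperSet U)
    (hlef : ∀ R ∈ U, ∀ P : Sylow p G, R < P →
      lefschetzSum p R = Nat.card (normalizer (R : Set G))) :
    (∑ g : G, eulerChar {R ∈ invariantPSubgroups p g | R ∈ U}) * Nat.card (Sylow p G) =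
      Nat.card G * Finset.card {P : Sylow p G | (P : Subgroup G) ∈ U} := by
  have hsylow : ∑ P ∈ {P : Sylow p G | (P : Subgroup G) ∈ U},
      (Nat.card (normalizer (P : Set G)) : ℤ) =
      ∑ R ∈ {R : Subgroup G | R ∈ U ∧ IsPGroup p R},
        ((Nat.card (normalizer (R : Set G)) : ℤ) - lefschetzSum p R) := by
    refine Finset.sum_of_injOn (fun P : Sylow p G => (P : Subgroup G)) ?_ ?_ ?_ ?_
    · exact fun P _ Q _ h => Sylow.ext h
    · exact fun P hP => Finset.mem_filter.2 ⟨Finset.mem_univ _, (Finset.mem_filter.1 hP).2, P.2⟩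
    · intro R hR hRP
      obtain ⟨-, hRU, hRp⟩ := Finset.mem_filter.1 hR
      obtain ⟨P, hle⟩ := hRp.exists_le_sylow
      have hne : R ≠ P := by
        rintro rfl
        exact hRP ⟨P, by simpa using hRU, rfl⟩
      rw [hlef R hRU P (hle.lt_of_ne hne), sub_self]
    · exact fun P _ => by rw [lefschetzSum_sylow, sub_zero]; rfl
  rw [sum_eulerChar_eq_sum_card_sub_lefschetzSum hU, ← hsylow, Finset.sum_mul]
  have hindex : ∀ P : Sylow p G,
      (Nat.card (normalizer (P : Set G)) : ℤ) * Nat.card (Sylow p G) = Nat.card G :=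
    fun P => mod_cast card_normalizer_mul_card_sylow P
  simp_rw [hindex, Finset.sum_const, nsmul_eq_mul, mul_comm]

theorem subgroupOf_normalizer_lt_of_lt {R S : Subgroup G} (hS : IsPGroup p S) (hRS : R < S) :
    R.subgroupOf (normalizer (R : Set G)) < S.subgroupOf (normalizer (R : Set G)) := by
  rw [← map_subtype_lt_map_subtype, subgroupOf_map_subtype, subgroupOf_map_subtype,
    inf_eq_left.2 le_normalizer]
  exact lt_inf_normalizer_of_isPGroup hS hRS

theorem subgroupOf_normalizer_lt_sylow {R : Subgroup G} {P : Sylow p G} (hRP : R < P)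
    (Q : Sylow p (normalizer (R : Set G))) : R.subgroupOf (normalizer (R : Set G)) < Q := by
  have hgrow := subgroupOf_normalizer_lt_of_lt P.2 hRP
  have hnormal : (R.subgroupOf (normalizer (R : Set G))).Normal := normal_in_normalizer
  have hRp : IsPGroup p (R.subgroupOf (normalizer (R : Set G))) := (P.2.to_le hRP.le).comap_subtype
  refine lt_of_le_of_ne (hRp.le_sylow_of_normal Q) fun h => ?_
  exact hgrow.ne' ((Q.is_maximal' P.2.comap_subtype (h.symm.trans_le hgrow.le)).trans h.symm)

theorem eulerChar_invariantPSubgroups_subgroupOf_normalizer (R : Subgroup G)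
    (g : normalizer (R : Set G)) :
    eulerChar {S ∈ invariantPSubgroups p (g : G) | R < S} =
      eulerChar {S ∈ invariantPSubgroups p g | R.subgroupOf (normalizer (R : Set G)) < S} := by
  refine eulerChar_eq_of_adjoint (f := fun S => S.subgroupOf (normalizer (R : Set G)))
    (g := map (normalizer (R : Set G)).subtype) ?_ ?_ fun S _ T _ => map_le_iff_le_comap
  · intro S hS
    simp only [Finset.coe_filter, mem_invariantPSubgroups, Set.mem_ofPred_eq] at hS ⊢
    obtain ⟨⟨hSp, hgS⟩, hRS⟩ := hS
    exact ⟨⟨hSp.comap_subtype, le_normalizer_comap _ hgS⟩, subgroupOf_normalizer_lt_of_lt hSp hRS⟩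
  · intro T hT
    simp only [Finset.coe_filter, mem_invariantPSubgroups, Set.mem_ofPred_eq] at hT ⊢
    obtain ⟨⟨hTp, hgT⟩, hRT⟩ := hT
    refine ⟨⟨hTp.map _, le_normalizer_map _ (mem_map_of_mem _ hgT)⟩, ?_⟩
    rwa [← map_subtype_lt_map_subtype, map_subgroupOf_eq_of_le le_normalizer] at hRT

theorem lefschetzSum_subgroupOf_normalizer (R : Subgroup G) :
    lefschetzSum p (R.subgroupOf (normalizer (R : Set G))) = lefschetzSum p R := by
  rw [lefschetzSum_of_normal, lefschetzSum]
  exact Finset.sum_congr (Finset.ext fun _ => by simp) fun g _ =>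
    (eulerChar_invariantPSubgroups_subgroupOf_normalizer R g).symm

theorem lefschetzSum_eq_card_of_normal (R : Subgroup G) [R.Normal]
    (hR : ∀ P : Sylow p G, R < P)
    (hlef : ∀ S, R < S → ∀ P : Sylow p G, S < P →
      lefschetzSum p S = Nat.card (normalizer (S : Set G))) :
    lefschetzSum p R = Nat.card G := by
  have hsum := sum_eulerChar_mul_card_sylow (isUpperSet_Ioi R) hlef
  simp only [Set.mem_Ioi] at hsum
  rw [← lefschetzSum_of_normal, Finset.filter_true_of_mem fun P _ => hR P, Finset.card_univ,
    ← Nat.card_eq_fintype_card] at hsum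
  exact mul_right_cancel₀ (Nat.cast_ne_zero.2 Nat.card_pos.ne') hsum

theorem lefschetzSum_eq_card_normalizer {R : Subgroup G} {P : Sylow p G} (hRP : R < P) :
    lefschetzSum p R = Nat.card (normalizer (R : Set G)) := by
  induction hn : R.index using Nat.strong_induction_on generalizing G with
  | h n ih =>
    rw [← lefschetzSum_subgroupOf_normalizer]
    refine lefschetzSum_eq_card_of_normal _ ?_ ?_
    · exact subgroupOf_normalizer_lt_sylow hRP
    · intro S hRS Q hSQ
      refine ih S.index ?_ hSQ rfl
      calc S.index < (R.subgroupOf (normalizer (R : Set G))).index := index_strictAnti hRS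
        _ ≤ R.index := Nat.le_of_dvd (Nat.pos_of_ne_zero index_ne_zero_of_finite)
          (relIndex_dvd_index_of_le le_normalizer)
        _ = n := hn

end Lefschetz

section SylowProportion

variable {G : Type*} [Group G] [Finite G] {p : ℕ}

theorem eulerChar_invariantPSubgroups_ge (g : G) (Q : Subgroup G) :
    eulerChar {R ∈ invariantPSubgroups p g | Q ≤ R} =
      if ∃ R ∈ invariantPSubgroups p g, Q ≤ R then 1 else 0 := by
  split_ifs with hne
  · refine eulerChar_eq_one_of_infClosed (Finset.filter_nonempty_iff.2 hne) fun R hR S hS => ?_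
    simp only [Finset.coe_filter, mem_invariantPSubgroups, Set.mem_ofPred_eq] at hR hS ⊢
    exact ⟨⟨hR.1.1.to_le inf_le_left, inf_normalizer_le_normalizer_inf ⟨hR.1.2, hS.1.2⟩⟩,
      le_inf hR.2 hS.2⟩
  · rw [Finset.filter_eq_empty_iff.2 fun R hR hQR => hne ⟨R, hR, hQR⟩, eulerChar_eq_sum,
      Finset.sum_empty]

variable [Fact p.Prime]

theorem card_subnormalizerSet_mul_card_sylow {x : G} (hx : IsPElement p x) :
    Nat.card (subnormalizerSet x) * Nat.card (Sylow p G) =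
      Nat.card G * Finset.card {P : Sylow p G | x ∈ P} := by
  have hsum := sum_eulerChar_mul_card_sylow (p := p) (isUpperSet_Ici (zpowers x))
    fun R _ P hRP => lefschetzSum_eq_card_normalizer hRP
  have hchar : ∀ g : G, eulerChar {R ∈ invariantPSubgroups p g | zpowers x ≤ R} =
      if g ∈ subnormalizerSet x then 1 else 0 := fun g => by
    simp only [eulerChar_invariantPSubgroups_ge, mem_subnormalizerSet_iff hx]
  have hcard : Nat.card (subnormalizerSet x) = Finset.card {g : G | g ∈ subnormalizerSet x} :=
    Nat.subtype_card _ fun _ => Finset.mem_filter_univ _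
  simp only [Set.mem_Ici, hchar, Finset.sum_boole, ← hcard] at hsum
  simp only [zpowers_le] at hsum
  exact_mod_cast hsum

theorem spr_eq_expect_sylow {x : G} (hx : IsPElement p x) :
    spr x = 𝔼 P : Sylow p G, if x ∈ P then (1 : ℚ) else 0 := by
  have hG : (Nat.card G : ℚ) ≠ 0 := Nat.cast_ne_zero.2 Nat.card_pos.ne'
  have hsylow : (Nat.card (Sylow p G) : ℚ) ≠ 0 := Nat.cast_ne_zero.2 Nat.card_pos.ne'
  rw [Fintype.expect_eq_sum_div_card, Finset.sum_boole, ← Nat.card_eq_fintype_card, spr,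
    div_eq_div_iff hG hsylow, mul_comm _ (Nat.card G : ℚ)]
  exact_mod_cast card_subnormalizerSet_mul_card_sylow hx

end SylowProportion

section Averaging

variable {H X M : Type*} [Group H] [Fintype H] [Fintype X] [MulAction H X]
  [AddCommMonoid M] [Module ℚ≥0 M]

theorem expect_eq_expect_expect_smul (f : X → M) :
    𝔼 y, f y = 𝔼 y, 𝔼 h : H, f (h • y) := by
  have hinv : ∀ h : H, 𝔼 y, f (h • y) = 𝔼 y, f y := fun h =>
    Fintype.expect_equiv (MulAction.toPerm h) _ _ fun _ => rfl
  rw [Finset.expect_comm]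
  simp_rw [hinv, Fintype.expect_const]

theorem expect_smul_eq_expect [MulAction.IsPretransitive H X] (f : X → M) (y : X) :
    𝔼 h : H, f (h • y) = 𝔼 z, f z := by
  have hconst : ∀ z : X, 𝔼 h : H, f (h • z) = 𝔼 h : H, f (h • y) := by
    intro z
    obtain ⟨k, rfl⟩ := MulAction.exists_smul_eq H y z
    exact Fintype.expect_equiv (Equiv.mulRight k) _ _ fun h => by
      rw [Equiv.coe_mulRight, mul_smul]
  have : Nonempty X := ⟨y⟩
  rw [expect_eq_expect_expect_smul (H := H) f]
  simp_rw [hconst, Fintype.expect_const]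

end Averaging

section Restriction

variable {G : Type*} [Group G] {p : ℕ}

theorem mem_sylow_smul_iff {P : Sylow p G} {g x : G} : x ∈ g • P ↔ g⁻¹ * x * g ∈ P := by
  change x ∈ MulAut.conj g • (P : Subgroup G) ↔ _
  rw [mem_pointwise_smul_iff_inv_smul_mem, ← map_inv, MulAut.smul_def, MulAut.conj_apply, inv_inv]
  rfl

variable {H : Subgroup G}

theorem IsPElement.mk_subgroup {x : G} (hxp : IsPElement p x) (hx : x ∈ H) :
    IsPElement p (⟨x, hx⟩ : H) := by
  rwa [IsPElement, orderOf_mk]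

theorem mem_smul_sylow_iff_mem_subgroupOf {P : Sylow p G} {x : G} (hx : x ∈ H) {h : H} :
    x ∈ h • P ↔ h⁻¹ * ⟨x, hx⟩ * h ∈ (P : Subgroup G).subgroupOf H :=
  mem_sylow_smul_iff

variable [Fact p.Prime]

theorem spr_eq_expect_smul_sylow [Fintype G] {x : G} (hxp : IsPElement p x) (P : Sylow p G) :
    spr x = 𝔼 g : G, if x ∈ g • P then (1 : ℚ) else 0 := by
  rw [spr_eq_expect_sylow hxp,
    expect_smul_eq_expect fun Q : Sylow p G => if x ∈ Q then (1 : ℚ) else 0]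

variable [Finite G]

theorem expect_mem_smul_sylow_le_spr {x : G} (hxp : IsPElement p x) (hx : x ∈ H) (P : Sylow p G) :
    𝔼 h : H, (if x ∈ h • P then (1 : ℚ) else 0) ≤ spr (⟨x, hx⟩ : H) := by
  obtain ⟨Q, hPQ⟩ := (P.2.comap_subtype (K := H)).exists_le_sylow
  rw [spr_eq_expect_smul_sylow (hxp.mk_subgroup hx) Q]
  refine Finset.expect_le_expect fun h _ => ?_
  rw [mem_smul_sylow_iff_mem_subgroupOf hx, mem_sylow_smul_iff]
  split_ifs with hP hQ
  exacts [le_rfl, absurd (hPQ hP) hQ, zero_le_one, le_rfl]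

theorem exists_sylow_eq_subgroupOf [H.Normal] (P : Sylow p G) :
    ∃ Q : Sylow p H, (Q : Subgroup H) = (P : Subgroup G).subgroupOf H := by
  obtain ⟨Q⟩ : Nonempty (Sylow p H) := inferInstance
  obtain ⟨P', hP'⟩ := Q.exists_comap_subtype_eq
  obtain ⟨g, rfl⟩ := MulAction.exists_smul_eq G P' P
  refine ⟨(MulAut.conjNormal g : MulAut H) • Q, ?_⟩
  ext z
  have hconj : ((MulAut.conjNormal g)⁻¹ z : H) ∈ (Q : Subgroup H) ↔ g⁻¹ * z * g ∈ P' := by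
    rw [← hP', mem_comap, subtype_apply, MulAut.conjNormal_inv_apply]
    rfl
  rw [Sylow.pointwise_smul_def, mem_pointwise_smul_iff_inv_smul_mem, MulAut.smul_def, hconj,
    ← mem_sylow_smul_iff]
  rfl

theorem expect_mem_smul_sylow_eq_spr [H.Normal] {x : G} (hxp : IsPElement p x) (hx : x ∈ H)
    (P : Sylow p G) :
    𝔼 h : H, (if x ∈ h • P then (1 : ℚ) else 0) = spr (⟨x, hx⟩ : H) := by
  obtain ⟨Q, hQ⟩ := exists_sylow_eq_subgroupOf (H := H) P
  rw [spr_eq_expect_smul_sylow (hxp.mk_subgroup hx) Q]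
  simp_rw [mem_smul_sylow_iff_mem_subgroupOf hx, mem_sylow_smul_iff, ← hQ]
  rfl

end Restriction

theorem stmt2 {G : Type*} [Group G] [Finite G] (p : ℕ) (hp : p.Prime)
    (hpdvd : p ∣ Nat.card G) (H : Subgroup G) (x : G) (hx : x ∈ H)
    (hxp : IsPElement p x) :
    spr x ≤ spr (⟨x, hx⟩ : H) ∧ (H.Normal → spr x = spr (⟨x, hx⟩ : H)) := by
  have : Fact p.Prime := ⟨hp⟩
  have hspr : spr x = 𝔼 P : Sylow p G, 𝔼 h : H, if x ∈ h • P then (1 : ℚ) else 0 := by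
    rw [spr_eq_expect_sylow hxp, expect_eq_expect_expect_smul (H := H)]
  rw [hspr]
  constructor
  · exact Finset.expect_le Finset.univ_nonempty fun P _ => expect_mem_smul_sylow_le_spr hxp hx P
  · intro hH
    simp_rw [expect_mem_smul_sylow_eq_spr hxp hx, Fintype.expect_const]
end

section
/- Let G be a finite group, p a prime dividing |G|, and x a p-element of G. Then spr_G(x) = λ_G(x)/n_p(G), where λ_G(x) is the number of Sylow p-subgroups of G containing x and n_p(G) is the total number of Sylow p-subgroups of G. -/
open Subgroup

/-!
An element `g` lies in `S_G(H)` exactly when it normalizes a `p`-subgroup containing `H`. Let `H`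
be a `p`-subgroup that is neither normal nor Sylow, and weight each `K` between `H` and `N = N_G(H)`
by the Möbius number `μ(H, K)`. Both sides of `|S_G(K)| n_p(G) = λ_G(K) |G|` then sum to zero over
`K`, so the formula holds for `H` once it holds for all larger subgroups. For `λ_G`, this is because
a Sylow subgroup containing `H` meets `N` in a subgroup strictly larger than `H`. For `S_G`, the
contribution of the elements inside `N` vanishes by the formula in the smaller group `N`, and that
of each `g ∉ N` by Weisner's theorem applied to joins with `M ⊓ N`, where `M` is the smallest
subgroup containing `H` that `g` normalizes.
-/

section Moebius

open Finset IncidenceAlgebra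

open Classical in
theorem sum_mul_natCard_eq_sum_sum_filter {R α ι : Type*} [NonAssocSemiring R] [Fintype ι]
    (s : Finset α) (f : α → R) (r : α → ι → Prop) :
    ∑ x ∈ s, f x * (Nat.card {i // r x i} : R) = ∑ i, ∑ x ∈ s with r x i, f x := by
  simp_rw [sum_filter]
  rw [sum_comm]
  refine sum_congr rfl fun x _ => ?_
  rw [← sum_filter, sum_const, Nat.card_eq_fintype_card, Fintype.card_subtype, nsmul_eq_mul']

variable {R α : Type*} [DecidableEq α]

theorem sum_mu_filter_sup_eq_eq_zero [AddCommGroup R] [One R] [Lattice α] [LocallyFiniteOrder α]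
    {a n : α} (han : a < n) (b : α) : ∑ x ∈ Icc a b with x ⊔ n = b, mu R a x = 0 := by
  rcases em (n ≤ b) with hnb | hnb
  · induction hk : #(Icc n b) using Nat.strong_induction_on generalizing b with | _ k ih
    have hmaps : ∀ x ∈ Icc a b, x ⊔ n ∈ Icc n b := fun x hx =>
      mem_Icc.2 ⟨le_sup_right, sup_le (mem_Icc.1 hx).2 hnb⟩
    have hlower : ∀ c ∈ Icc n b, c ≠ b → ∑ x ∈ Icc a b with x ⊔ n = c, mu R a x = 0 := by
      intro c hc hcb
      obtain ⟨hnc, hle⟩ := mem_Icc.1 hc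
      have hcard : #(Icc n c) < k := hk ▸ card_lt_card
        (Icc_ssubset_Icc_right hnb le_rfl (lt_of_le_of_ne hle hcb))
      rw [← ih _ hcard c hnc rfl]
      congr 1
      ext x
      simp only [mem_filter, mem_Icc]
      constructor
      · rintro ⟨⟨hax, -⟩, rfl⟩
        exact ⟨⟨hax, le_sup_left⟩, rfl⟩
      · rintro ⟨⟨hax, hxc⟩, rfl⟩
        exact ⟨⟨hax, hxc.trans hle⟩, rfl⟩
    calc ∑ x ∈ Icc a b with x ⊔ n = b, mu R a x
        = ∑ c ∈ Icc n b, ∑ x ∈ Icc a b with x ⊔ n = c, mu R a x :=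
          (sum_eq_single_of_mem b (right_mem_Icc.2 hnb) hlower).symm
      _ = ∑ x ∈ Icc a b, mu R a x := sum_fiberwise_of_maps_to hmaps _
      _ = 0 := by rw [sum_Icc_mu_right, if_neg (han.trans_le hnb).ne]
  · rw [filter_false_of_mem fun x _ hx => hnb (le_sup_right.trans hx.le), sum_empty]

theorem sum_mu_eq_zero_of_sup_mem [AddCommGroup R] [One R] [Lattice α] [LocallyFiniteOrder α]
    {a n : α} (han : a < n) {Y : Finset α} (hle : ∀ x ∈ Y, a ≤ x)
    (hIcc : ∀ x ∈ Y, Icc a x ⊆ Y) (hsup : ∀ x ∈ Y, x ⊔ n ∈ Y) : ∑ x ∈ Y, mu R a x = 0 := by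
  rw [← sum_fiberwise_of_maps_to hsup]
  refine sum_eq_zero fun b hb => ?_
  rw [← sum_mu_filter_sup_eq_eq_zero han b]
  congr 1
  ext x
  simp only [mem_filter, mem_Icc, and_congr_left_iff]
  rintro rfl
  exact ⟨fun hx => ⟨hle x hx, le_sup_left⟩, fun hx => hIcc _ hb (mem_Icc.2 hx)⟩

theorem sum_mu_mul_natCard_le_eq_zero [NonAssocRing R] [Lattice α] [LocallyFiniteOrder α]
    {ι : Type*} [Finite ι] {a b : α} (f : ι → α) (hf : ∀ i, a ≤ f i → a < f i ⊓ b) :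
    ∑ x ∈ Icc a b, mu R a x * (Nat.card {i // x ≤ f i} : R) = 0 := by
  classical
  have := Fintype.ofFinite ι
  rw [sum_mul_natCard_eq_sum_sum_filter _ _ fun x i => x ≤ f i]
  refine sum_eq_zero fun i _ => ?_
  have hfilter : (Icc a b).filter (· ≤ f i) = Icc a (f i ⊓ b) := by
    ext x
    simp only [mem_filter, mem_Icc, le_inf_iff]
    tauto
  rw [hfilter]
  by_cases hi : a ≤ f i
  · rw [sum_Icc_mu_right, if_neg (hf i hi).ne]
  · rw [Icc_eq_empty fun h => hi (h.trans inf_le_left), sum_empty]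

end Moebius

section Core

variable {G : Type*} [Group G] {p : ℕ}

theorem normalizer_le_normalizer_map_subtype (K : Subgroup G) (C : Subgroup K)
    [hC : C.Characteristic] :
    normalizer (K : Set G) ≤ normalizer (C.map K.subtype : Set G) := by
  rw [le_normalizer_iff]
  rintro g hg _ ⟨c, hc, rfl⟩
  exact ⟨K.normalizerMonoidHom ⟨g, hg⟩ c, characteristic_iff_le_comap.1 hC _ hc, rfl⟩

/-- The `p`-core `O_p(G)`, the largest normal `p`-subgroup of `G`, encoded as the intersection of
all Sylow `p`-subgroups. It measures which `p`-subgroups are subnormal. -/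
def pCore (p : ℕ) (G : Type*) [Group G] : Subgroup G :=
  ⨅ Q : Sylow p G, (Q : Subgroup G)

theorem isPGroup_pCore : IsPGroup p (pCore p G) :=
  (default : Sylow p G).isPGroup'.to_le (iInf_le _ _)

theorem le_pCore {H : Subgroup G} [H.Normal] (hH : IsPGroup p H) : H ≤ pCore p G :=
  le_iInf hH.le_sylow_of_normal

instance characteristic_pCore : (pCore p G).Characteristic := by
  refine characteristic_iff_le_comap.2 fun φ x hx => mem_iInf.2 fun Q => ?_
  have hrange : (Q : Subgroup G) ≤ φ.toMonoidHom.range :=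
    le_top.trans (MonoidHom.range_eq_top_of_surjective _ φ.surjective).ge
  exact mem_iInf.1 hx (Q.comapOfInjective φ.toMonoidHom φ.injective hrange)

theorem NormalIn.map_pCore_le {K J : Subgroup G} (h : NormalIn K J) :
    (pCore p K).map K.subtype ≤ (pCore p J).map J.subtype := by
  obtain ⟨hKJ, hnormal⟩ := h
  have hmap : (pCore p K).map K.subtype ≤ J := (map_subtype_le _).trans hKJ
  have : (((pCore p K).map K.subtype).subgroupOf J).Normal :=
    (normal_subgroupOf_iff_le_normalizer hmap).2
      (((normal_subgroupOf_iff_le_normalizer hKJ).1 hnormal).trans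
        (normalizer_le_normalizer_map_subtype K (pCore p K)))
  rw [← map_subgroupOf_eq_of_le hmap]
  exact map_mono (le_pCore (isPGroup_pCore.map _).comap_subtype)

theorem IsSubnormalIn.le_map_pCore {H K : Subgroup G} (h : IsSubnormalIn H K)
    (hH : IsPGroup p H) : H ≤ (pCore p K).map K.subtype := by
  induction h with
  | refl =>
    have htop : IsPGroup p (⊤ : Subgroup H) := hH.to_subgroup ⊤
    calc H = (⊤ : Subgroup H).map H.subtype := by rw [← MonoidHom.range_eq_map, range_subtype]
      _ ≤ (pCore p H).map H.subtype := map_mono (le_pCore htop)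
  | tail _ hKJ ih => exact ih.trans (NormalIn.map_pCore_le hKJ)

end Core

section PSubnormalizer

variable {G : Type*} [Group G] {p : ℕ} {H K L N : Subgroup G} {g : G}

theorem lt_inf_normalizer [Finite G] [Fact p.Prime] (hL : IsPGroup p L) (h : H < L) :
    H < L ⊓ normalizer (H : Set G) := by
  have : Group.IsNilpotent L := hL.isNilpotent
  have hlt : H.subgroupOf L < normalizer (H.subgroupOf L : Set L) :=
    Group.normalizerCondition_of_isNilpotent _
      (lt_top_iff_ne_top.2 fun htop => h.not_ge (subgroupOf_eq_top.1 htop))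
  rw [← subgroupOf_normalizer_eq h.le] at hlt
  obtain ⟨y, hyN, hyH⟩ := SetLike.exists_of_lt hlt
  exact lt_of_le_of_ne (le_inf h.le le_normalizer) fun heq => hyH (heq.ge ⟨y.2, hyN⟩)

theorem lt_map_subtype_sylow [(H.subgroupOf N).Normal] (hL : IsPGroup p L)
    (hHL : H < L) (hLN : L ≤ N) (Q : Sylow p N) : H < (Q : Subgroup N).map N.subtype := by
  have hHQ : H.subgroupOf N < Q := by
    refine (IsPGroup.le_sylow_of_normal (N := H.subgroupOf N)
      (hL.to_le hHL.le).comap_subtype Q).lt_of_ne fun heq => ?_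
    have hLQ : L.subgroupOf N = Q :=
      Q.is_maximal' hL.comap_subtype (heq.ge.trans (subgroupOf_mono N hHL.le))
    exact hHL.not_ge fun y hy => (hLQ.trans heq.symm).le (x := ⟨y, hLN hy⟩) hy
  calc H = (H.subgroupOf N).map N.subtype := (map_subgroupOf_eq_of_le (hHL.le.trans hLN)).symm
    _ < (Q : Subgroup N).map N.subtype := map_subtype_lt_map_subtype.2 hHQ

theorem isSubnormalIn_of_isPGroup_s3 [Finite G] [Fact p.Prime] (hL : IsPGroup p L) (h : H ≤ L) :
    IsSubnormalIn H L := by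
  induction H using WellFoundedGT.induction with | _ H ih
  rcases h.eq_or_lt with rfl | hlt
  · exact Relation.ReflTransGen.refl
  · have hgrow := lt_inf_normalizer hL hlt
    exact .head ⟨hgrow.le, normal_subgroupOf_of_le_normalizer inf_le_right⟩
      (ih _ hgrow inf_le_left)

/-- The elements of `G` that normalize some `p`-subgroup containing `H`. For a `p`-subgroup `H` of a
finite group this is the Wielandt subnormalizer `S_G(H)`, and it is empty if `H` is not a
`p`-subgroup. -/
def pSubnormalizer (p : ℕ) (H : Subgroup G) : Set G :=
  {g | ∃ L : Subgroup G, IsPGroup p L ∧ H ≤ L ∧ g ∈ normalizer (L : Set G)}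

theorem isSubnormalIn_sup_zpowers_iff [Finite G] [Fact p.Prime] (hH : IsPGroup p H) :
    IsSubnormalIn H (H ⊔ zpowers g) ↔ g ∈ pSubnormalizer p H := by
  set J := H ⊔ zpowers g
  constructor
  · intro h
    have hnorm : J ≤ normalizer ((pCore p J).map J.subtype : Set G) :=
      le_normalizer.trans (normalizer_le_normalizer_map_subtype J _)
    exact ⟨_, isPGroup_pCore.map _, h.le_map_pCore hH,
      hnorm (mem_sup_right (mem_zpowers g))⟩
  · rintro ⟨L, hL, hHL, hg⟩
    have hJ : J ≤ normalizer (L : Set G) :=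
      sup_le (hHL.trans le_normalizer) (by rwa [zpowers_le])
    have hnormal : ((L ⊓ J).subgroupOf J).Normal :=
      normal_subgroupOf_of_le_normalizer
        ((le_inf hJ le_normalizer).trans inf_normalizer_le_normalizer_inf)
    exact (isSubnormalIn_of_isPGroup_s3 hL.to_inf_left (le_inf hHL le_sup_left)).tail
      ⟨inf_le_right, hnormal⟩

theorem pSubnormalizer_anti (h : H ≤ K) : pSubnormalizer p K ⊆ pSubnormalizer p H :=
  fun _ ⟨L, hL, hKL, hg⟩ => ⟨L, hL, h.trans hKL, hg⟩

theorem mem_pSubnormalizer_subgroupOf (hK : K ≤ N) {g : N} :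
    g ∈ pSubnormalizer p (K.subgroupOf N) ↔ (g : G) ∈ pSubnormalizer p K := by
  constructor
  · rintro ⟨L, hL, hKL, hg⟩
    refine ⟨L.map N.subtype, hL.map _, ?_, le_normalizer_map _ (mem_map_of_mem N.subtype hg)⟩
    exact (map_subgroupOf_eq_of_le hK).ge.trans (map_mono hKL)
  · rintro ⟨L, hL, hKL, hg⟩
    exact ⟨L.subgroupOf N, hL.comap_subtype, subgroupOf_mono N hKL, le_normalizer_comap _ hg⟩

theorem exists_isLeast_le_mem_normalizer (H : Subgroup G) (g : G) :
    ∃ M, IsLeast {L : Subgroup G | H ≤ L ∧ g ∈ normalizer (L : Set G)} M := by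
  refine ⟨_, ⟨le_sInf fun L hL => hL.1, ?_⟩, fun L hL => sInf_le hL⟩
  rw [sInf_eq_iInf']
  exact iInf_normalizer_le_normalizer_iInf _ (mem_iInf.2 fun L => L.2.2)

end PSubnormalizer

section MoebiusSums

open Finset IncidenceAlgebra

variable {G : Type*} [Group G] [Finite G] {p : ℕ} [Fact p.Prime] {H : Subgroup G}
  [LocallyFiniteOrder (Subgroup G)] [DecidableEq (Subgroup G)]

theorem sum_mu_mul_natCard_sylow_eq_zero (hS : ∀ Q : Sylow p G, ↑Q ≠ H) :
    ∑ K ∈ Icc H (normalizer (H : Set G)),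
      mu ℤ H K * (Nat.card {Q : Sylow p G // K ≤ Q} : ℤ) = 0 :=
  sum_mu_mul_natCard_le_eq_zero (fun Q : Sylow p G => (Q : Subgroup G)) fun Q hHQ =>
    lt_inf_normalizer Q.isPGroup' (hHQ.lt_of_ne' (hS Q))

theorem sum_mu_mul_natCard_sylow_normalizer_eq_zero (hH : IsPGroup p H)
    (hS : ∀ Q : Sylow p G, ↑Q ≠ H) :
    ∑ K ∈ Icc H (normalizer (H : Set G)), mu ℤ H K *
      (Nat.card {Q : Sylow p (normalizer (H : Set G)) //
        K.subgroupOf (normalizer (H : Set G)) ≤ Q} : ℤ) = 0 := by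
  set N := normalizer (H : Set G)
  have hnormal : (H.subgroupOf N).Normal := normal_in_normalizer
  obtain ⟨P, hHP⟩ := hH.exists_le_sylow
  have hlt : H < ↑P ⊓ N := lt_inf_normalizer P.isPGroup' (hHP.lt_of_ne' (hS P))
  rw [← sum_mu_mul_natCard_le_eq_zero (R := ℤ) (a := H) (b := N)
    (fun Q : Sylow p N => (Q : Subgroup N).map N.subtype) fun Q _ =>
      (lt_map_subtype_sylow P.isPGroup'.to_inf_left hlt inf_le_right Q).trans_le
        (le_inf le_rfl (map_subtype_le _))]
  refine sum_congr rfl fun K hK => ?_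
  simp_rw [← map_subtype_le_map_subtype, map_subgroupOf_eq_of_le (mem_Icc.1 hK).2]

open Classical in
theorem sum_mu_filter_mem_pSubnormalizer_eq_zero {g : G} (hg : g ∉ normalizer (H : Set G)) :
    ∑ K ∈ Icc H (normalizer (H : Set G)) with g ∈ pSubnormalizer p K, mu ℤ H K = 0 := by
  by_cases hgH : g ∈ pSubnormalizer p H
  · obtain ⟨M, ⟨hHM, hgM⟩, hM⟩ := exists_isLeast_le_mem_normalizer H g
    have hMp : IsPGroup p M := by
      obtain ⟨L, hL, hHL, hgL⟩ := hgH
      exact hL.to_le (hM ⟨hHL, hgL⟩)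
    have hlt : H < M := lt_of_le_of_ne hHM fun heq => hg (heq ▸ hgM)
    -- A `p`-subgroup that contains `K ≥ H` and is normalized by `g` also contains `M`, so the
    -- family summed over is closed under joining with `M ⊓ normalizer H`.
    refine sum_mu_eq_zero_of_sup_mem (lt_inf_normalizer hMp hlt) ?_ ?_ ?_ <;>
      simp only [mem_filter, mem_Icc, and_imp]
    · exact fun K hHK _ _ => hHK
    · intro K _ hKN hgK K' hK'
      obtain ⟨hHK', hK'K⟩ := mem_Icc.1 hK'
      exact mem_filter.2 ⟨mem_Icc.2 ⟨hHK', hK'K.trans hKN⟩, pSubnormalizer_anti hK'K hgK⟩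
    · rintro K hHK hKN ⟨L, hL, hKL, hgL⟩
      have hML : M ≤ L := hM ⟨hHK.trans hKL, hgL⟩
      exact ⟨⟨le_sup_of_le_left hHK, sup_le hKN inf_le_right⟩,
        L, hL, sup_le hKL (inf_le_left.trans hML), hgL⟩
  · rw [filter_false_of_mem, sum_empty]
    exact fun K hK hgK => hgH (pSubnormalizer_anti (mem_Icc.1 hK).1 hgK)

end MoebiusSums

section CountingFormula

open Finset IncidenceAlgebra

variable {G : Type*} [Group G] {p : ℕ} {H : Subgroup G}

/-- The formula `|S_G(H)| / |G| = λ_G(H) / n_p(G)` with denominators cleared, where `λ_G(H)` counts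
the Sylow `p`-subgroups containing `H`. It is named so that it can be the motive of an induction on
`G` and `H`. -/
def SubnormalizerFormula (p : ℕ) (H : Subgroup G) : Prop :=
  Nat.card (pSubnormalizer p H) * Nat.card (Sylow p G) =
    Nat.card {Q : Sylow p G // H ≤ Q} * Nat.card G

theorem subnormalizerFormula_of_not_isPGroup (hH : ¬ IsPGroup p H) : SubnormalizerFormula p H := by
  have : IsEmpty (pSubnormalizer p H) := ⟨fun ⟨_, _, hL, hHL, _⟩ => hH (hL.to_le hHL)⟩
  have : IsEmpty {Q : Sylow p G // H ≤ Q} := ⟨fun ⟨Q, hHQ⟩ => hH (Q.isPGroup'.to_le hHQ)⟩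
  simp [SubnormalizerFormula]

theorem subnormalizerFormula_of_normal [H.Normal] (hH : IsPGroup p H) :
    SubnormalizerFormula p H := by
  have hsub : pSubnormalizer p H = Set.univ := Set.eq_univ_of_forall fun g =>
    ⟨H, hH, le_rfl, normalizer_eq_top (H := H) ▸ mem_top g⟩
  have hsyl : Nat.card {Q : Sylow p G // H ≤ Q} = Nat.card (Sylow p G) :=
    Nat.card_congr (Equiv.subtypeUnivEquiv hH.le_sylow_of_normal)
  rw [SubnormalizerFormula, hsub, hsyl, Nat.card_univ, mul_comm]

theorem subnormalizerFormula_sylow [Finite (Sylow p G)] [Fact p.Prime] (Q : Sylow p G) :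
    SubnormalizerFormula p (Q : Subgroup G) := by
  have hsub : pSubnormalizer p (Q : Subgroup G) = normalizer (Q : Set G) := by
    ext g
    constructor
    · rintro ⟨L, hL, hQL, hg⟩
      rwa [Q.is_maximal' hL hQL] at hg
    · exact fun hg => ⟨Q, Q.isPGroup', le_rfl, hg⟩
  have hsyl : Nat.card {P : Sylow p G // (Q : Subgroup G) ≤ P} = 1 :=
    Nat.card_eq_one_iff_exists.2 ⟨⟨Q, le_rfl⟩, fun ⟨P, hQP⟩ =>
      Subtype.ext (Sylow.ext (Q.is_maximal' P.isPGroup' hQP))⟩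
  rw [SubnormalizerFormula, hsub, hsyl, Q.card_eq_index_normalizer, one_mul]
  exact card_mul_index _

section Step

variable [Finite G] [Fact p.Prime] [LocallyFiniteOrder (Subgroup G)] [DecidableEq (Subgroup G)]

theorem sum_mu_mul_natCard_pSubnormalizer_normalizer_eq_zero (hH : IsPGroup p H)
    (hS : ∀ Q : Sylow p G, ↑Q ≠ H)
    (hN : ∀ K : Subgroup (normalizer (H : Set G)), SubnormalizerFormula p K) :
    ∑ K ∈ Icc H (normalizer (H : Set G)), mu ℤ H K *
      (Nat.card {g : normalizer (H : Set G) // ↑g ∈ pSubnormalizer p K} : ℤ) = 0 := by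
  set N := normalizer (H : Set G)
  have hterm : ∀ K ∈ Icc H N,
      mu ℤ H K * (Nat.card {g : N // ↑g ∈ pSubnormalizer p K} : ℤ) * Nat.card (Sylow p N) =
        mu ℤ H K * (Nat.card {Q : Sylow p N // K.subgroupOf N ≤ Q} : ℤ) * Nat.card N := by
    intro K hK
    simp_rw [mul_assoc, ← mem_pSubnormalizer_subgroupOf (mem_Icc.1 hK).2]
    exact congrArg (mu ℤ H K * ·) (mod_cast hN (K.subgroupOf N))
  have hsylow : (Nat.card (Sylow p N) : ℤ) ≠ 0 := mod_cast Nat.card_pos.ne'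
  refine mul_right_cancel₀ hsylow ?_
  rw [sum_mul, sum_congr rfl hterm, ← sum_mul,
    sum_mu_mul_natCard_sylow_normalizer_eq_zero hH hS, zero_mul, zero_mul]

theorem sum_mu_mul_natCard_pSubnormalizer_eq_zero (hH : IsPGroup p H)
    (hS : ∀ Q : Sylow p G, ↑Q ≠ H)
    (hN : ∀ K : Subgroup (normalizer (H : Set G)), SubnormalizerFormula p K) :
    ∑ K ∈ Icc H (normalizer (H : Set G)),
      mu ℤ H K * (Nat.card (pSubnormalizer p K) : ℤ) = 0 := by
  classical
  have := Fintype.ofFinite G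
  set N := normalizer (H : Set G)
  have hinside : ∑ g : {g // g ∈ N},
      ∑ K ∈ Icc H N with (g : G) ∈ pSubnormalizer p K, mu ℤ H K = 0 := by
    rw [← sum_mul_natCard_eq_sum_sum_filter _ _ fun K (g : N) => (g : G) ∈ pSubnormalizer p K]
    exact sum_mu_mul_natCard_pSubnormalizer_normalizer_eq_zero hH hS hN
  have houtside : ∑ g : {g // g ∉ N},
      ∑ K ∈ Icc H N with (g : G) ∈ pSubnormalizer p K, mu ℤ H K = 0 :=
    sum_eq_zero fun g _ => sum_mu_filter_mem_pSubnormalizer_eq_zero g.2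
  calc ∑ K ∈ Icc H N, mu ℤ H K * (Nat.card (pSubnormalizer p K) : ℤ)
      = ∑ g : G, ∑ K ∈ Icc H N with g ∈ pSubnormalizer p K, mu ℤ H K :=
        sum_mul_natCard_eq_sum_sum_filter _ _ fun K g => g ∈ pSubnormalizer p K
    _ = 0 := by
        rw [← Fintype.sum_subtype_add_sum_subtype (· ∈ N), hinside, houtside, add_zero]

end Step

theorem subnormalizerFormula_of_gt_of_normalizer [Finite G] [Fact p.Prime] (hH : IsPGroup p H)
    (hS : ∀ Q : Sylow p G, ↑Q ≠ H)
    (hN : ∀ K : Subgroup (normalizer (H : Set G)), SubnormalizerFormula p K)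
    (hgt : ∀ K > H, SubnormalizerFormula p K) : SubnormalizerFormula p H := by
  classical
  have := Fintype.ofFinite (Subgroup G)
  let : LocallyFiniteOrder (Subgroup G) := Fintype.toLocallyFiniteOrder
  let defect (K : Subgroup G) : ℤ := Nat.card (pSubnormalizer p K) * Nat.card (Sylow p G) -
    Nat.card {Q : Sylow p G // K ≤ Q} * Nat.card G
  have hdefect (K : Subgroup G) : defect K = 0 ↔ SubnormalizerFormula p K := by
    rw [sub_eq_zero]
    exact_mod_cast Iff.rfl
  have hsum : ∑ K ∈ Icc H (normalizer (H : Set G)), mu ℤ H K * defect K = 0 := by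
    simp_rw [defect, mul_sub, ← mul_assoc]
    rw [sum_sub_distrib, ← sum_mul, ← sum_mul, sum_mu_mul_natCard_sylow_eq_zero hS,
      sum_mu_mul_natCard_pSubnormalizer_eq_zero hH hS hN, zero_mul, zero_mul, sub_zero]
  have hzero : ∀ K ∈ Icc H (normalizer (H : Set G)), K ≠ H → mu ℤ H K * defect K = 0 :=
    fun K hK hne => by
      rw [(hdefect K).2 (hgt K ((mem_Icc.1 hK).1.lt_of_ne' hne)), mul_zero]
  rw [sum_eq_single_of_mem H (left_mem_Icc.2 le_normalizer) hzero, mu_self, one_mul] at hsum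
  exact (hdefect H).1 hsum

theorem subnormalizerFormula [Finite G] [Fact p.Prime] (H : Subgroup G) :
    SubnormalizerFormula p H := by
  induction hn : Nat.card G using Nat.strong_induction_on generalizing G with | _ n ihG
  induction H using WellFoundedGT.induction with | _ H ihH
  by_cases hH : IsPGroup p H
  swap
  · exact subnormalizerFormula_of_not_isPGroup hH
  by_cases hS : ∃ Q : Sylow p G, ↑Q = H
  · obtain ⟨Q, rfl⟩ := hS
    exact subnormalizerFormula_sylow Q
  by_cases hnormal : H.Normal
  · exact subnormalizerFormula_of_normal hH
  have hlt : Nat.card (normalizer (H : Set G)) < n := by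
    refine hn ▸ (card_le_card_group _).lt_of_ne fun heq => hnormal ?_
    exact normalizer_eq_top_iff.1 (eq_top_of_card_eq _ heq)
  exact subnormalizerFormula_of_gt_of_normalizer hH (not_exists.1 hS)
    (fun K => ihG _ hlt K rfl) ihH

end CountingFormula

theorem isPGroup_zpowers_of_isPElement {G : Type*} [Group G] {p : ℕ} {x : G}
    (hx : IsPElement p x) : IsPGroup p (zpowers x) := by
  obtain ⟨k, hk⟩ := hx
  exact IsPGroup.of_card ((Nat.card_zpowers x).trans hk)

theorem subnormalizerSet_eq_pSubnormalizer {G : Type*} [Group G] [Finite G] {p : ℕ}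
    [Fact p.Prime] {x : G} (hx : IsPGroup p (zpowers x)) :
    subnormalizerSet x = pSubnormalizer p (zpowers x) :=
  Set.ext fun _ => isSubnormalIn_sup_zpowers_iff hx

theorem stmt3 {G : Type*} [Group G] [Finite G] (p : ℕ) [Fact p.Prime]
    (hpdvd : p ∣ Nat.card G) (x : G) (hxp : IsPElement p x) :
    spr x = (Nat.card {Q : Sylow p G | x ∈ (Q : Subgroup G)} : ℚ) /
      (Nat.card (Sylow p G) : ℚ) := by
  have hx : IsPGroup p (zpowers x) := isPGroup_zpowers_of_isPElement hxp
  have hformula : SubnormalizerFormula p (zpowers x) := subnormalizerFormula _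
  simp_rw [SubnormalizerFormula, zpowers_le] at hformula
  have hG : (Nat.card G : ℚ) ≠ 0 := mod_cast Nat.card_pos.ne'
  have hSylow : (Nat.card (Sylow p G) : ℚ) ≠ 0 := mod_cast Nat.card_pos.ne'
  rw [spr, subnormalizerSet_eq_pSubnormalizer hx, div_eq_div_iff hG hSylow]
  exact_mod_cast hformula
end

section
/- Let L be a nonabelian finite simple group. Then the maximum over x ∈ Aut(L) of |C_L(x)| is at most |L|/6 unless L ≅ A_5, and for L = A_5 the maximum equals |L|/10 = 6. -/
/-!
The fixed points of `x ≠ 1` form a proper subgroup `H` of `L`. If its index is at most `5`, the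
action on `L ⧸ H` embeds `L` into `S₅`, hence into `A₅` since `L` has no nontrivial abelian
quotient. A proper subgroup of `A₅` has index at least `5`, so if the image of `L` were proper, then
`|L|` would be a divisor of `60` not exceeding `12`, and `L` would have a Sylow subgroup of index
too small for a faithful action on its cosets. Thus `L ≅ A₅`.

For `p ≥ 5` prime, every subgroup `H` of index `p` in `A_p` is a point stabilizer: `p` does not
divide `|H|`, so `H` is intransitive and stabilizes a proper nonempty set `B`. The stabilizer of `B`
has index `p.choose |B|`, and this divides `p` only when `B` or its complement is a point. An
automorphism therefore permutes the point stabilizers, and is conjugation by the resulting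
permutation. So every fixed-point subgroup of `A₅` is `A₅ ∩ C(s)` for some `s ∈ S₅`. For `s ≠ 1`,
the cycle type of `s` shows that `C(s)` has order at most `12`, and at most `6` when contained in
`A₅`; otherwise exactly half of `C(s)` is even. A transposition attains the bound `12 / 2`.
-/

open Equiv MulAction
open scoped Nat Pointwise

theorem lt_choose_of_two_le {n k : ℕ} (hk : 2 ≤ k) (hkn : k + 2 ≤ n) : n < n.choose k := by
  induction n, hkn using Nat.le_induction with
  | base =>
    rw [Nat.choose_symm_add, Nat.choose_two_right,
      Nat.lt_div_iff_mul_lt_of_dvd two_ne_zero (Nat.even_mul_pred_self _).two_dvd]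
    exact Nat.mul_lt_mul_of_pos_left (by omega) (by omega)
  | succ n hn ih =>
    obtain ⟨j, rfl⟩ : ∃ j, k = j + 1 := ⟨k - 1, by omega⟩
    have := Nat.choose_pos (n := n) (k := j) (by omega)
    rw [Nat.choose_succ_succ']
    omega

theorem exists_prime_pow_mul_of_dvd_sixty {n : ℕ} (hn : 1 < n) (hn12 : n ≤ 12) (hdvd : n ∣ 60) :
    ∃ p k m : ℕ, p.Prime ∧ n = p ^ k * m ∧ ¬ n ∣ m ! := by
  interval_cases n
  · exact ⟨2, 1, 1, by decide⟩
  · exact ⟨3, 1, 1, by decide⟩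
  · exact ⟨2, 2, 1, by decide⟩
  · exact ⟨5, 1, 1, by decide⟩
  · exact ⟨3, 1, 2, by decide⟩
  any_goals omega
  · exact ⟨5, 1, 2, by decide⟩
  · exact ⟨2, 2, 3, by decide⟩

section SimpleGroup

variable {G : Type*} [Group G] [IsSimpleGroup G]

theorem toPermHom_quotient_injective {H : Subgroup G} (hH : H ≠ ⊤) :
    Function.Injective (toPermHom G (G ⧸ H)) := by
  rw [← MonoidHom.ker_eq_bot_iff, ← Subgroup.normalCore_eq_ker]
  refine H.normalCore_normal.eq_bot_or_eq_top.resolve_right fun h ↦ hH ?_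
  exact top_le_iff.mp (h ▸ H.normalCore_le)

theorem card_dvd_factorial_index {H : Subgroup G} [H.FiniteIndex] (hH : H ≠ ⊤) :
    Nat.card G ∣ H.index ! := by
  rw [Subgroup.index_eq_card, ← Nat.card_perm]
  exact Subgroup.card_dvd_of_injective _ (toPermHom_quotient_injective hH)

theorem card_dvd_factorial_of_card_eq_prime_pow_mul [Finite G] (hG : ¬ Group.IsSolvable G)
    {p k m : ℕ} [Fact p.Prime] (hcard : Nat.card G = p ^ k * m) : Nat.card G ∣ m ! := by
  obtain ⟨K, hK⟩ := Sylow.exists_subgroup_card_pow_prime p (hcard ▸ dvd_mul_right (p ^ k) m)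
  have hK_top : K ≠ ⊤ := by
    rintro rfl
    have := (IsPGroup.of_card (Subgroup.card_top.symm.trans hK)).isNilpotent
    exact hG inferInstance
  have hindex : K.index = m := by
    refine Nat.eq_of_mul_eq_mul_left (hK ▸ Nat.card_pos : 0 < p ^ k) ?_
    rw [← hK, K.card_mul_index, hcard, hK]
  exact hindex ▸ card_dvd_factorial_index hK_top

theorem monoidHom_eq_one_of_not_isSolvable (hG : ¬ Group.IsSolvable G) {A : Type*} [Group A]
    [Group.IsSolvable A] (f : G →* A) : f = 1 := by
  rw [← MonoidHom.ker_eq_top_iff]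
  refine f.normal_ker.eq_bot_or_eq_top.resolve_left fun h ↦ hG ?_
  exact Group.isSolvable_of_isSolvable_injective ((MonoidHom.ker_eq_bot_iff f).mp h)

theorem isSolvable_of_card_le_twelve_of_card_dvd_sixty (hle : Nat.card G ≤ 12)
    (hdvd : Nat.card G ∣ 60) : Group.IsSolvable G := by
  have : Finite G := Nat.finite_of_card_ne_zero (ne_zero_of_dvd_ne_zero (by norm_num) hdvd)
  by_contra hG
  obtain ⟨p, k, m, hp, hcard, hndvd⟩ :=
    exists_prime_pow_mul_of_dvd_sixty Finite.one_lt_card hle hdvd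
  have := Fact.mk hp
  exact hndvd (card_dvd_factorial_of_card_eq_prime_pow_mul hG hcard)

end SimpleGroup

section AlternatingGroup

variable {α : Type*} [Fintype α] [DecidableEq α]

theorem card_le_index_alternatingGroup_of_ne_top (h5 : 5 ≤ Nat.card α)
    {K : Subgroup (alternatingGroup α)} (hK : K ≠ ⊤) : Nat.card α ≤ K.index := by
  have := alternatingGroup.isSimpleGroup h5
  have : Nontrivial α := Finite.one_lt_card_iff_nontrivial.mp (by omega)
  by_contra! h
  have hle : Nat.card (alternatingGroup α) ≤ (Nat.card α - 1)! :=
    (Nat.le_of_dvd (Nat.factorial_pos _) (card_dvd_factorial_index hK)).trans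
      (Nat.factorial_le (by omega))
  have htwo := two_mul_nat_card_alternatingGroup (α := α)
  rw [Nat.card_perm, ← Nat.mul_factorial_pred (by omega)] at htwo
  nlinarith [Nat.factorial_pos (Nat.card α - 1)]

theorem index_alternatingGroup_stabilizer_set (h3 : 3 ≤ Nat.card α) (B : Set α) :
    (stabilizer (alternatingGroup α) B).index = (Nat.card α).choose B.ncard := by
  have := Set.powersetCard.isPretransitive_alternatingGroup (n := B.ncard) h3
  let b : Set.powersetCard α B.ncard :=
    Set.powersetCard.ofCard (B.ncard_eq_toFinset_card B.toFinite).symm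
  have hb : stabilizer (alternatingGroup α) b = stabilizer (alternatingGroup α) B := by
    refine (Set.powersetCard.stabilizer_coe b).trans ?_
    congr
    exact B.toFinite.coe_toFinset
  rw [← hb, index_stabilizer_of_transitive, Set.powersetCard.card]

theorem ncard_eq_one_or_ncard_compl_eq_one (h3 : 3 ≤ Nat.card α)
    {H : Subgroup (alternatingGroup α)} (hH : H.index = Nat.card α) {B : Set α}
    (hHB : H ≤ stabilizer (alternatingGroup α) B) (hne : B.Nonempty) (huniv : B ≠ Set.univ) :
    B.ncard = 1 ∨ Bᶜ.ncard = 1 := by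
  have hdvd : (Nat.card α).choose B.ncard ∣ Nat.card α := by
    rw [← index_alternatingGroup_stabilizer_set h3, ← hH]
    exact Subgroup.index_dvd_of_le hHB
  have hle := Nat.le_of_dvd (by omega) hdvd
  have hpos : 0 < B.ncard := hne.ncard_pos
  have hcpos : 0 < Bᶜ.ncard := (Set.nonempty_compl.mpr huniv).ncard_pos
  have hadd := Set.ncard_add_ncard_compl B
  by_contra! h
  exact hle.not_gt (lt_choose_of_two_le (by omega) (by omega))

theorem not_card_dvd_card_of_index_eq_card (hp : (Nat.card α).Prime)
    {H : Subgroup (alternatingGroup α)} (hH : H.index = Nat.card α) :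
    ¬ Nat.card α ∣ Nat.card H := by
  intro hdvd
  have : Nontrivial α := Finite.one_lt_card_iff_nontrivial.mp hp.one_lt
  have hcard : Nat.card α * (2 * Nat.card H) = Nat.card α * (Nat.card α - 1)! := by
    rw [Nat.mul_factorial_pred hp.ne_zero, ← Nat.card_perm, ← two_mul_nat_card_alternatingGroup,
      ← H.card_mul_index, hH]
    ring
  have hdvd' : Nat.card α ∣ (Nat.card α - 1)! :=
    Nat.eq_of_mul_eq_mul_left hp.pos hcard ▸ hdvd.mul_left 2
  have := hp.dvd_factorial.mp hdvd'
  have := hp.pos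
  omega

theorem exists_eq_stabilizer_of_index_eq_card (hp : (Nat.card α).Prime) (h3 : 3 ≤ Nat.card α)
    {H : Subgroup (alternatingGroup α)} (hH : H.index = Nat.card α) :
    ∃ i : α, H = stabilizer (alternatingGroup α) i := by
  have : Nontrivial α := Finite.one_lt_card_iff_nontrivial.mp hp.one_lt
  have := alternatingGroup.isPretransitive_of_three_le_card α h3
  suffices ∃ i, H ≤ stabilizer (alternatingGroup α) i by
    obtain ⟨i, hi⟩ := this
    refine ⟨i, Subgroup.eq_of_le_of_card_ge hi ?_⟩
    have h1 := H.card_mul_index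
    have h2 := (stabilizer (alternatingGroup α) i).card_mul_index
    rw [index_stabilizer_of_transitive, ← hH, ← h1] at h2
    exact (Nat.eq_of_mul_eq_mul_right (hH ▸ hp.pos) h2).le
  let i₀ : α := Classical.arbitrary α
  let B : Set α := orbit H i₀
  have hHB : H ≤ stabilizer (alternatingGroup α) B := fun h hh ↦ smul_orbit (⟨h, hh⟩ : H) i₀
  have hB : B ≠ Set.univ := by
    intro hB
    apply not_card_dvd_card_of_index_eq_card hp hH
    rw [← Set.ncard_univ, ← hB, ← index_stabilizer]
    exact Subgroup.index_dvd_card _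
  have hBne : B.Nonempty := ⟨i₀, mem_orbit_self i₀⟩
  rcases ncard_eq_one_or_ncard_compl_eq_one h3 hH hHB hBne hB with h1 | h1
  · obtain ⟨i, hi⟩ := Set.ncard_eq_one.mp h1
    exact ⟨i, by rwa [hi, stabilizer_singleton] at hHB⟩
  · obtain ⟨i, hi⟩ := Set.ncard_eq_one.mp h1
    exact ⟨i, by rwa [← stabilizer_compl, hi, stabilizer_singleton] at hHB⟩

theorem stabilizer_alternatingGroup_injective (h4 : 4 ≤ Nat.card α) :
    Function.Injective (stabilizer (alternatingGroup α) : α → _) := by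
  have := alternatingGroup.isMultiplyPretransitive α
  have h2 : IsMultiplyPretransitive (alternatingGroup α) α 2 :=
    isMultiplyPretransitive_of_le (n := Nat.card α - 2) (by omega) (by omega)
  rw [is_two_pretransitive_iff] at h2
  intro i j hij
  by_contra! hne
  obtain ⟨k, -, hk⟩ := Finset.exists_mem_notMem_of_card_lt_card (s := {i, j}) (t := Finset.univ)
    (Finset.card_le_two.trans_lt (by rw [Finset.card_univ, ← Nat.card_eq_fintype_card]; omega))
  simp only [Finset.mem_insert, Finset.mem_singleton, not_or] at hk
  obtain ⟨g, hgi, hgj⟩ := h2 hne (Ne.symm hk.1)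
  have hgj' : g ∈ stabilizer (alternatingGroup α) j := hij ▸ hgi
  exact hk.2 (hgj.symm.trans hgj')

theorem exists_conjNormal_eq_of_map_stabilizer (h4 : 4 ≤ Nat.card α)
    (x : MulAut (alternatingGroup α))
    (hx : ∀ i : α, ∃ j : α, (stabilizer (alternatingGroup α) i).map x.toMonoidHom =
      stabilizer (alternatingGroup α) j) :
    ∃ s : Perm α, MulAut.conjNormal s = x := by
  choose σ hσ using hx
  have hinj : Function.Injective σ := by
    intro i j hij
    apply stabilizer_alternatingGroup_injective h4
    apply Subgroup.map_injective (f := x.toMonoidHom) x.injective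
    rw [hσ, hσ, hij]
  have hequiv (g : alternatingGroup α) (i : α) : σ (g • i) = x g • σ i := by
    apply stabilizer_alternatingGroup_injective h4
    rw [stabilizer_smul_eq_stabilizer_map_conj, ← hσ, ← hσ, stabilizer_smul_eq_stabilizer_map_conj,
      Subgroup.map_map, Subgroup.map_map]
    congr 1
    ext a : 1
    simp
  let s : Perm α := Equiv.ofBijective σ (Finite.injective_iff_bijective.mp hinj)
  refine ⟨s, ?_⟩
  ext g i
  obtain ⟨i, rfl⟩ := s.surjective i
  rw [MulAut.conjNormal_apply, Perm.mul_apply, Perm.mul_apply, Perm.inv_def, symm_apply_apply]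
  exact hequiv g i

theorem conjNormal_alternatingGroup_surjective (hp : (Nat.card α).Prime) (h5 : 5 ≤ Nat.card α) :
    Function.Surjective (MulAut.conjNormal : Perm α →* MulAut (alternatingGroup α)) := by
  intro x
  refine exists_conjNormal_eq_of_map_stabilizer (by omega) x fun i ↦ ?_
  have := alternatingGroup.isPretransitive_of_three_le_card α (by omega)
  exact exists_eq_stabilizer_of_index_eq_card hp (by omega) <|
    (Subgroup.index_map_equiv _ x).trans (index_stabilizer_of_transitive _ i)

end AlternatingGroup

section FixedSubgroup

variable {G : Type*} [Group G]

/-- The fixed-point subgroup `C_G(x)` of an automorphism `x` of `G`. -/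
def fixedSubgroup (x : MulAut G) : Subgroup G :=
  x.toMonoidHom.eqLocus (MonoidHom.id G)

theorem fixedSubgroup_eq_top_iff {x : MulAut G} : fixedSubgroup x = ⊤ ↔ x = 1 := by
  rw [Subgroup.eq_top_iff', MulEquiv.ext_iff]
  rfl

theorem fixedSubgroup_conjNormal {N : Subgroup G} [N.Normal] (g : G) :
    fixedSubgroup (MulAut.conjNormal g : MulAut N) =
      (Subgroup.centralizer {g}).subgroupOf N := by
  ext a
  rw [Subgroup.mem_subgroupOf, Subgroup.mem_centralizer_singleton_iff, eq_comm,
    ← mul_inv_eq_iff_eq_mul]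
  exact Subtype.ext_iff

end FixedSubgroup

section Centralizer

variable {α : Type*} [Fintype α] [DecidableEq α]

theorem two_mul_card_subgroupOf_alternatingGroup {K : Subgroup (Perm α)}
    (hK : ¬ K ≤ alternatingGroup α) :
    2 * Nat.card (K.subgroupOf (alternatingGroup α)) = Nat.card K := by
  have : Nontrivial α := by
    by_contra h
    rw [not_nontrivial_iff_subsingleton] at h
    exact hK fun a _ ↦ Subsingleton.elim 1 a ▸ one_mem _
  have hrel : (alternatingGroup α).relIndex K = 2 := by
    have hdvd := Subgroup.relIndex_dvd_index_of_normal (alternatingGroup α) K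
    rw [alternatingGroup.index_eq_two, Nat.dvd_prime Nat.prime_two] at hdvd
    exact hdvd.resolve_left (mt Subgroup.relIndex_eq_one.mp hK)
  rw [← Subgroup.card_subtype, Subgroup.subgroupOf_map_subtype, inf_comm, mul_comm, ← hrel,
    ← Subgroup.relIndex_bot_left, Subgroup.relIndex_inf_mul_relIndex, bot_inf_eq,
    Subgroup.relIndex_bot_left]

theorem card_fixedSubgroup_conjNormal_swap {i j : α} (hij : i ≠ j) :
    Nat.card (fixedSubgroup (MulAut.conjNormal (swap i j) : MulAut (alternatingGroup α))) =
      (Nat.card α - 2)! := by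
  have hodd : ¬ Subgroup.centralizer {swap i j} ≤ alternatingGroup α := fun h ↦ by
    have := h (Subgroup.mem_centralizer_singleton_iff.mpr rfl)
    simp [Perm.sign_swap hij] at this
  rw [fixedSubgroup_conjNormal]
  refine Nat.eq_of_mul_eq_mul_left two_pos ?_
  rw [two_mul_card_subgroupOf_alternatingGroup hodd, Perm.nat_card_centralizer,
    (Perm.isCycle_swap hij).cycleType, Perm.card_support_swap hij]
  simp [mul_comm]

theorem cycleType_mem_of_card_eq_five (hα : Nat.card α = 5) {s : Perm α} (hs : s ≠ 1) :
    s.cycleType ∈ ({{2}, {3}, {4}, {5}, {2, 2}, {2, 3}} : Set (Multiset ℕ)) := by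
  have hsum : s.cycleType.sum ≤ 5 := by
    rw [Perm.sum_cycleType, ← hα, Nat.card_eq_fintype_card]
    exact Finset.card_le_univ _
  have htwo (k : ℕ) (hk : k ∈ s.cycleType) : 2 ≤ k := Perm.two_le_of_mem_cycleType hk
  have hcard : s.cycleType.card * 2 ≤ s.cycleType.sum := Multiset.card_nsmul_le_sum htwo
  have hpos : 0 < s.cycleType.card := Perm.card_cycleType_pos.mpr hs
  obtain h1 | h2 : s.cycleType.card = 1 ∨ s.cycleType.card = 2 := by omega
  · obtain ⟨k, hk⟩ := Multiset.card_eq_one.mp h1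
    simp only [hk, Multiset.mem_singleton, forall_eq, Multiset.sum_singleton] at htwo hsum
    rw [hk]
    interval_cases k <;> simp
  · obtain ⟨k, l, hkl⟩ := Multiset.card_eq_two.mp h2
    have hk : 2 ≤ k := htwo k (by simp [hkl])
    have hl : 2 ≤ l := htwo l (by simp [hkl])
    have hkl_sum : k + l ≤ 5 := by simpa [hkl] using hsum
    rw [hkl]
    obtain ⟨rfl, rfl⟩ | ⟨rfl, rfl⟩ | ⟨rfl, rfl⟩ :
        k = 2 ∧ l = 2 ∨ k = 2 ∧ l = 3 ∨ k = 3 ∧ l = 2 := by omega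
    · simp
    · simp
    · simp [Multiset.pair_comm 3 2]

theorem card_centralizer_le_twelve {α : Type*} (hα : Nat.card α = 5) {s : Perm α} (hs : s ≠ 1) :
    Nat.card (Subgroup.centralizer {s}) ≤ 12 := by
  classical
  have : Finite α := Nat.finite_of_card_ne_zero (by omega)
  have := Fintype.ofFinite α
  rw [Perm.nat_card_centralizer, ← Nat.card_eq_fintype_card, hα]
  rcases cycleType_mem_of_card_eq_five hα hs with h | h | h | h | h | h <;> rw [h] <;> decide

theorem card_centralizer_le_six_of_le_alternatingGroup (hα : Nat.card α = 5)
    {s : Perm α} (hs : s ≠ 1) (h : Subgroup.centralizer {s} ≤ alternatingGroup α) :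
    Nat.card (Subgroup.centralizer {s}) ≤ 6 := by
  obtain ⟨hodd, hsum, -⟩ := Perm.centralizer_le_alternating_iff.mp h
  rw [← Nat.card_eq_fintype_card, hα] at hsum
  rw [Perm.nat_card_centralizer, ← Nat.card_eq_fintype_card, hα]
  revert hodd hsum
  rcases cycleType_mem_of_card_eq_five hα hs with h | h | h | h | h | h <;> rw [h] <;> decide

theorem card_fixedSubgroup_alternatingGroup_le_six (hα : Nat.card α = 5)
    {x : MulAut (alternatingGroup α)} (hx : x ≠ 1) : Nat.card (fixedSubgroup x) ≤ 6 := by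
  obtain ⟨s, rfl⟩ := conjNormal_alternatingGroup_surjective (hα ▸ Nat.prime_five) hα.ge x
  have hs : s ≠ 1 := by
    rintro rfl
    exact hx (map_one _)
  rw [fixedSubgroup_conjNormal]
  by_cases hle : Subgroup.centralizer {s} ≤ alternatingGroup α
  · rw [Nat.card_congr (Subgroup.subgroupOfEquivOfLe hle).toEquiv]
    exact card_centralizer_le_six_of_le_alternatingGroup hα hs hle
  · have := two_mul_card_subgroupOf_alternatingGroup hle
    have := card_centralizer_le_twelve hα hs
    omega

end Centralizer

section Embedding

variable {L : Type*} [Group L] [IsSimpleGroup L]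

theorem card_alternatingGroup_fin_five : Nat.card (alternatingGroup (Fin 5)) = 60 := by
  rw [nat_card_alternatingGroup, Nat.card_fin]
  rfl

theorem nonempty_mulEquiv_alternatingGroup_of_injective (hL : ¬ Group.IsSolvable L)
    {f : L →* Perm (Fin 5)} (hf : Function.Injective f) :
    Nonempty (L ≃* alternatingGroup (Fin 5)) := by
  have : Finite L := Finite.of_injective f hf
  have hsign : Perm.sign.comp f = 1 := monoidHom_eq_one_of_not_isSolvable hL _
  let g : L →* alternatingGroup (Fin 5) := f.codRestrict _ (DFunLike.congr_fun hsign)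
  have hg : Function.Injective g := fun a b h ↦ hf (congrArg Subtype.val h)
  suffices hrange : g.range = ⊤ from
    ⟨MulEquiv.ofBijective g ⟨hg, MonoidHom.range_eq_top.mp hrange⟩⟩
  by_contra hrange
  have hindex := card_le_index_alternatingGroup_of_ne_top (Nat.card_fin 5).ge hrange
  have hmul := g.range.card_mul_index
  rw [Nat.card_fin] at hindex
  rw [← Nat.card_congr (MonoidHom.ofInjective hg).toEquiv, card_alternatingGroup_fin_five] at hmul
  exact hL (isSolvable_of_card_le_twelve_of_card_dvd_sixty (by nlinarith) ⟨_, hmul.symm⟩)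

theorem nonempty_mulEquiv_alternatingGroup_of_index_le_five (hL : ¬ Group.IsSolvable L)
    {H : Subgroup L} [H.FiniteIndex] (hH : H ≠ ⊤) (hindex : H.index ≤ 5) :
    Nonempty (L ≃* alternatingGroup (Fin 5)) := by
  let e : L ⧸ H ↪ Fin 5 := (Finite.equivFin (L ⧸ H)).toEmbedding.trans (Fin.castLEEmb hindex)
  exact nonempty_mulEquiv_alternatingGroup_of_injective hL
    (f := (Perm.viaEmbeddingHom e).comp (toPermHom L (L ⧸ H)))
    ((Perm.viaEmbeddingHom_injective e).comp (toPermHom_quotient_injective hH))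

theorem six_mul_card_fixedSubgroup_le [Finite L] (hL : ¬ Group.IsSolvable L)
    (hA5 : ¬ Nonempty (L ≃* alternatingGroup (Fin 5))) {x : MulAut L} (hx : x ≠ 1) :
    6 * Nat.card (fixedSubgroup x) ≤ Nat.card L := by
  rw [← (fixedSubgroup x).card_mul_index, mul_comm]
  refine Nat.mul_le_mul_left _ ?_
  by_contra! hindex
  exact hA5 <| nonempty_mulEquiv_alternatingGroup_of_index_le_five hL
    (mt fixedSubgroup_eq_top_iff.mp hx) (Nat.le_of_lt_succ hindex)

end Embedding

/-- For a nonabelian finite simple group `L` and a nontrivial automorphism `x` of `L`,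
the fixed-point subgroup `C_L(x)` has size at most `|L|/6` unless `L ≅ A₅`; for
`L = A₅` the maximum of `|C_L(x)|` over nontrivial `x ∈ Aut(L)` is `|L|/10 = 6`. -/
theorem stmt19 (L : Type*) [Group L] [Finite L] [IsSimpleGroup L]
    (hna : ∃ a b : L, a * b ≠ b * a) :
    (¬ Nonempty (L ≃* alternatingGroup (Fin 5)) →
      ∀ x : MulAut L, x ≠ 1 → 6 * Nat.card {a : L | x a = a} ≤ Nat.card L) ∧
    (∀ x : MulAut (alternatingGroup (Fin 5)), x ≠ 1 →
      Nat.card {a : alternatingGroup (Fin 5) | x a = a} ≤ 6) ∧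
    (∃ x : MulAut (alternatingGroup (Fin 5)), x ≠ 1 ∧
      Nat.card {a : alternatingGroup (Fin 5) | x a = a} = 6) ∧
    Nat.card (alternatingGroup (Fin 5)) / 10 = 6 := by
  have hL : ¬ Group.IsSolvable L := by
    rw [← IsSimpleGroup.comm_iff_isSolvable]
    simpa only [not_forall] using hna
  have hswap := card_fixedSubgroup_conjNormal_swap (zero_ne_one (α := Fin 5))
  rw [Nat.card_fin] at hswap
  refine ⟨fun hA5 x ↦ six_mul_card_fixedSubgroup_le hL hA5,
    fun x ↦ card_fixedSubgroup_alternatingGroup_le_six (Nat.card_fin 5),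
    ⟨MulAut.conjNormal (swap 0 1), fun h ↦ ?_, hswap⟩, by rw [card_alternatingGroup_fin_five]⟩
  rw [fixedSubgroup_eq_top_iff.mpr h, Subgroup.card_top, card_alternatingGroup_fin_five] at hswap
  contradiction
end
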